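/- Let V ⊆ ℝ² be an open convex set, g : ℝ → ℝ³ a smooth map, and h₁, h₂ : V → ℝ³ smooth maps satisfying ∂₂ h₁(u) − ∂₁ h₂(u) = [g(u¹)] h₂(u) for all u = (u¹,u²) ∈ V. Then there exists a smooth map k : V → ℝ³ such that h₁ = ∂₁ k + [g(u¹)] k and h₂ = ∂₂ k on V. -/

import Mathlib

open Matrix

noncomputable section

/-- Partial derivative in the `j`-th coordinate direction. -/
def pd {m : ℕ} {F : Type*} [NormedAddCommGroup F] [NormedSpace ℝ F]
    (j : Fin m) (f : (Fin m → ℝ) → F) (u : Fin m → ℝ) : F :=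
  fderiv ℝ f u (Pi.single j 1)

/-- The special orthogonal group SO(3), as a set of 3×3 real matrices. -/
def SO3 : Set (Matrix (Fin 3) (Fin 3) ℝ) :=
  {A | Aᵀ * A = 1 ∧ A.det = 1}

/-- The skew-symmetric matrix `[v]` associated to `v ∈ ℝ³`, with `[v] w = w × v`. -/
def crossMat (v : Fin 3 → ℝ) : Matrix (Fin 3) (Fin 3) ℝ :=
  !![0, v 2, -(v 1); -(v 2), 0, v 0; v 1, -(v 0), 0]

/-- The Jacobian matrix of a map `x : ℝ³ → ℝ³`. -/
def jacobian (x : (Fin 3 → ℝ) → (Fin 3 → ℝ)) (u : Fin 3 → ℝ) :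
    Matrix (Fin 3) (Fin 3) ℝ :=
  Matrix.of fun i j => pd j x u i

/-- `W(u) = a(u)⁻¹ · Dx(u)`, the coefficient matrix of the coframing `ω = a⁻¹ dx`. -/
def Wmat (a : (Fin 3 → ℝ) → Matrix (Fin 3) (Fin 3) ℝ)
    (x : (Fin 3 → ℝ) → (Fin 3 → ℝ)) (u : Fin 3 → ℝ) : Matrix (Fin 3) (Fin 3) ℝ :=
  (a u)⁻¹ * jacobian x u

/-- The tableau `A_Q`: the span of the matrices `[x] + [y] Q`. -/
def tableau (Q : Matrix (Fin 3) (Fin 3) ℝ) : Submodule ℝ (Matrix (Fin 3) (Fin 3) ℝ) :=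
  Submodule.span ℝ {M | ∃ x y : Fin 3 → ℝ, M = crossMat x + crossMat y * Q}

end

/-!
A fundamental solution `A` of `A' = A G`, with `G t = [g t]`, is an integrating factor: wherever
`h₁ = ∂₁k + G k` and `h₂ = ∂₂k`, the products `A h₁` and `A h₂` are the partial derivatives of
`A k`. Conversely, the hypothesis on `h₁` and `h₂` says exactly that `A h₁ du¹ + A h₂ du²` is
closed, so on a convex open set it has a primitive `φ`, and `k = A⁻¹ φ` is the required map.
-/

section LinearODE

open Set Metric MeasureTheory

open scoped Interval Nat

theorem exists_norm_le_on_closedBall {X F : Type*} [PseudoMetricSpace X] [ProperSpace X]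
    [SeminormedAddCommGroup F] {f : X → F} (hf : Continuous f) (c : X) (r : ℝ) :
    ∃ M, ∀ z ∈ closedBall c r, ‖f z‖ ≤ M :=
  (isCompact_closedBall c r).exists_bound_of_continuousOn hf.continuousOn

variable {F : Type*} [NormedAddCommGroup F] [NormedSpace ℝ F]
  {L : ℝ → F →L[ℝ] F} {x y : ℝ → F} {t₀ t T M : ℝ} {x₀ : F}

/-- The `n`-th term of the Picard series of the linear initial value problem `x' = L x`,
`x t₀ = x₀`, whose sum is the solution. -/
noncomputable def picardTerm (L : ℝ → F →L[ℝ] F) (t₀ : ℝ) (x₀ : F) : ℕ → ℝ → F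
  | 0 => fun _ ↦ x₀
  | n + 1 => fun t ↦ ∫ s in t₀..t, L s (picardTerm L t₀ x₀ n s)

theorem picardTerm_succ_self (n : ℕ) : picardTerm L t₀ x₀ (n + 1) t₀ = 0 :=
  intervalIntegral.integral_same

theorem continuous_picardTerm (hL : Continuous L) (n : ℕ) :
    Continuous (picardTerm L t₀ x₀ n) := by
  induction n with
  | zero => exact continuous_const
  | succ n ih =>
    exact intervalIntegral.continuous_primitive
      (fun a b ↦ (hL.clm_apply ih).intervalIntegrable a b) t₀

theorem hasDerivAt_picardTerm_succ [CompleteSpace F] (hL : Continuous L) (n : ℕ) (t : ℝ) :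
    HasDerivAt (picardTerm L t₀ x₀ (n + 1)) (L t (picardTerm L t₀ x₀ n t)) t :=
  ((hL.clm_apply (continuous_picardTerm hL n)).integral_hasStrictDerivAt t₀ t).hasDerivAt

theorem norm_picardTerm_le (hM : ∀ s ∈ uIcc t₀ t, ‖L s‖ ≤ M) (n : ℕ) :
    ‖picardTerm L t₀ x₀ n t‖ ≤ ‖x₀‖ * ((M * |t - t₀|) ^ n / n !) := by
  induction n generalizing t with
  | zero => simp [picardTerm]
  | succ n ih =>
    have integrand_le : ∀ s ∈ Ι t₀ t,
        ‖L s (picardTerm L t₀ x₀ n s)‖ ≤ ‖x₀‖ * M ^ (n + 1) / n ! * |s - t₀| ^ n := by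
      intro s hs
      have hs' : s ∈ uIcc t₀ t := uIoc_subset_uIcc hs
      calc ‖L s (picardTerm L t₀ x₀ n s)‖ ≤ M * (‖x₀‖ * ((M * |s - t₀|) ^ n / n !)) :=
            (L s).le_of_opNorm_le_of_le (hM s hs')
              (ih fun r hr ↦ hM r (uIcc_subset_uIcc_left hs' hr))
        _ = ‖x₀‖ * M ^ (n + 1) / n ! * |s - t₀| ^ n := by ring
    calc ‖picardTerm L t₀ x₀ (n + 1) t‖
        = ‖∫ s in Ι t₀ t, L s (picardTerm L t₀ x₀ n s)‖ :=
          intervalIntegral.norm_intervalIntegral_eq _ _ _ _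
      _ ≤ ∫ s in Ι t₀ t, ‖x₀‖ * M ^ (n + 1) / n ! * |s - t₀| ^ n :=
          norm_integral_le_of_norm_le
            (Continuous.intervalIntegrable (by fun_prop) t₀ t).def'
            (ae_restrict_of_forall_mem measurableSet_uIoc integrand_le)
      _ = ‖x₀‖ * ((M * |t - t₀|) ^ (n + 1) / (n + 1)!) := by
          rw [integral_const_mul, integral_pow_abs_sub_uIoc, Nat.factorial_succ]
          push_cast
          field_simp
          ring

theorem norm_picardTerm_le_of_mem_closedBall (hM : ∀ s ∈ closedBall t₀ T, ‖L s‖ ≤ M)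
    (ht : t ∈ closedBall t₀ T) (n : ℕ) :
    ‖picardTerm L t₀ x₀ n t‖ ≤ ‖x₀‖ * ((M * T) ^ n / n !) := by
  have hT : |t - t₀| ≤ T := by rwa [mem_closedBall, Real.dist_eq] at ht
  have ht₀ : t₀ ∈ closedBall t₀ T := mem_closedBall_self ((abs_nonneg _).trans hT)
  have hM₀ : 0 ≤ M := (norm_nonneg _).trans (hM t₀ ht₀)
  have hsub : uIcc t₀ t ⊆ closedBall t₀ T := by
    rw [← segment_eq_uIcc]
    exact (convex_closedBall t₀ T).segment_subset ht₀ ht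
  refine (norm_picardTerm_le (fun s hs ↦ hM s (hsub hs)) n).trans ?_
  gcongr

theorem summable_picardTerm [CompleteSpace F] (hL : Continuous L) (t₀ : ℝ) (x₀ : F) (t : ℝ) :
    Summable fun n ↦ picardTerm L t₀ x₀ n t := by
  obtain ⟨M, hM⟩ := exists_norm_le_on_closedBall hL t₀ (dist t t₀)
  exact .of_norm_bounded ((Real.summable_pow_div_factorial _).mul_left _)
    fun n ↦ norm_picardTerm_le_of_mem_closedBall hM (mem_closedBall.2 le_rfl) n

theorem hasDerivAt_tsum_picardTerm_succ [CompleteSpace F] (hL : Continuous L) (t₀ : ℝ) (x₀ : F)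
    (t : ℝ) :
    HasDerivAt (fun s ↦ ∑' n, picardTerm L t₀ x₀ (n + 1) s)
      (∑' n, L t (picardTerm L t₀ x₀ n t)) t := by
  set T := dist t t₀ + 1
  obtain ⟨M, hM⟩ := exists_norm_le_on_closedBall hL t₀ T
  have deriv_le : ∀ n, ∀ s ∈ ball t₀ T,
      ‖L s (picardTerm L t₀ x₀ n s)‖ ≤ M * (‖x₀‖ * ((M * T) ^ n / n !)) := fun n s hs ↦
    have hs' := ball_subset_closedBall hs
    (L s).le_of_opNorm_le_of_le (hM s hs') (norm_picardTerm_le_of_mem_closedBall hM hs' n)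
  exact hasDerivAt_tsum_of_isPreconnected
    (((Real.summable_pow_div_factorial _).mul_left _).mul_left M) isOpen_ball
    (convex_ball t₀ T).isPreconnected (fun n s _ ↦ hasDerivAt_picardTerm_succ hL n s) deriv_le
    (mem_ball_self (by positivity)) ((summable_nat_add_iff 1).2 (summable_picardTerm hL t₀ x₀ t₀))
    (mem_ball.2 (lt_add_one _))

theorem exists_isIntegralCurve_clm [CompleteSpace F] (hL : Continuous L) (t₀ : ℝ) (x₀ : F) :
    ∃ x : ℝ → F, x t₀ = x₀ ∧ IsIntegralCurve x fun t ↦ L t := by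
  refine ⟨fun t ↦ x₀ + ∑' n, picardTerm L t₀ x₀ (n + 1) t, ?_, fun t ↦ ?_⟩
  · simp only [picardTerm_succ_self, tsum_zero, add_zero]
  have hsum := summable_picardTerm hL t₀ x₀ t
  have shift : L t (x₀ + ∑' n, picardTerm L t₀ x₀ (n + 1) t) =
      ∑' n, L t (picardTerm L t₀ x₀ n t) := by
    rw [← (L t).map_tsum hsum, hsum.tsum_eq_zero_add, picardTerm]
  simpa only [shift] using (hasDerivAt_tsum_picardTerm_succ hL t₀ x₀ t).const_add x₀

theorem eq_of_isIntegralCurve_clm (hL : Continuous L) (hx : IsIntegralCurve x fun t ↦ L t)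
    (hy : IsIntegralCurve y fun t ↦ L t) (h₀ : x t₀ = y t₀) : x = y := by
  funext t
  set T := dist t t₀ + 1
  obtain ⟨M, hM⟩ := exists_norm_le_on_closedBall hL t₀ T
  have hlip : ∀ s ∈ Ioo (t₀ - T) (t₀ + T), LipschitzOnWith M.toNNReal (L s) univ := by
    intro s hs
    rw [← Real.ball_eq_Ioo] at hs
    exact ((L s).lipschitzWith_of_opNorm_le
      ((hM s (ball_subset_closedBall hs)).trans (Real.le_coe_toNNReal M))).lipschitzOnWith
  refine ODE_solution_unique_of_mem_Ioo hlip ?_ (fun s _ ↦ ⟨hx s, mem_univ _⟩)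
    (fun s _ ↦ ⟨hy s, mem_univ _⟩) h₀ ?_ <;> rw [← Real.ball_eq_Ioo]
  · exact mem_ball_self (by positivity)
  · exact mem_ball.2 (lt_add_one _)

theorem contDiff_succ_of_isIntegralCurve_clm {n : ℕ∞} (hL : ContDiff ℝ n L)
    (hx : IsIntegralCurve x fun t ↦ L t) : ContDiff ℝ (n + 1) x := by
  have hdiff : Differentiable ℝ x := fun t ↦ (hx t).differentiableAt
  have hderiv : deriv x = fun t ↦ L t (x t) := funext fun t ↦ (hx t).deriv
  have gain : ∀ m : ℕ∞, m ≤ n → ContDiff ℝ m x → ContDiff ℝ (m + 1) x := by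
    intro m hm h
    rw [contDiff_succ_iff_deriv, hderiv]
    exact ⟨hdiff, by simp, (hL.of_le (by exact_mod_cast hm)).clm_apply h⟩
  have bootstrap : ∀ m : ℕ, (m : ℕ∞) ≤ n → ContDiff ℝ m x := by
    intro m
    induction m with
    | zero => exact fun _ ↦ contDiff_zero.2 hdiff.continuous
    | succ m ih =>
      intro hm
      have hm' : (m : ℕ∞) ≤ n := le_trans (by exact_mod_cast m.le_succ) hm
      exact_mod_cast gain m hm' (ih hm')
  exact gain n le_rfl (contDiff_iff_forall_nat_le.2 bootstrap)

end LinearODE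

section IntegratingFactor

variable {R : Type*} [NormedRing R] [NormedAlgebra ℝ R] {G A B : ℝ → R}

theorem mul_eq_one_of_hasDerivAt (hA : ∀ t, HasDerivAt A (A t * G t) t)
    (hB : ∀ t, HasDerivAt B (-(G t * B t)) t) {t₀ : ℝ} (h₀ : A t₀ * B t₀ = 1) (t : ℝ) :
    A t * B t = 1 := by
  have hAB : ∀ s, HasDerivAt (A * B) 0 s := fun s ↦ by
    simpa only [mul_neg, mul_assoc, add_neg_cancel] using (hA s).mul (hB s)
  rw [← h₀]
  exact is_const_of_deriv_eq_zero (fun s ↦ (hAB s).differentiableAt) (fun s ↦ (hAB s).deriv) t t₀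

/- `A * B` is constant, but `B * A` is only known to solve `C' = C G - G C`, which the constant `1`
solves as well. -/
theorem mul_eq_one_of_hasDerivAt' (hG : Continuous G) (hA : ∀ t, HasDerivAt A (A t * G t) t)
    (hB : ∀ t, HasDerivAt B (-(G t * B t)) t) {t₀ : ℝ} (h₀ : B t₀ * A t₀ = 1) (t : ℝ) :
    B t * A t = 1 := by
  let L : ℝ → R →L[ℝ] R := fun t ↦
    (ContinuousLinearMap.mul ℝ R).flip (G t) - ContinuousLinearMap.mul ℝ R (G t)
  have hL : Continuous L := by fun_prop
  have hBA : IsIntegralCurve (B * A) fun t ↦ L t := fun t ↦ by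
    refine ((hB t).mul (hA t)).congr_deriv ?_
    change -(G t * B t) * A t + B t * (A t * G t) = B t * A t * G t - G t * (B t * A t)
    noncomm_ring
  have hone : IsIntegralCurve (fun _ ↦ (1 : R)) fun t ↦ L t :=
    isIntegralCurve_const fun t ↦ by simp [L]
  exact congrFun (eq_of_isIntegralCurve_clm hL hBA hone h₀) t

theorem exists_integratingFactor [CompleteSpace R] {n : ℕ∞} (hG : ContDiff ℝ n G) :
    ∃ A : ℝ → Rˣ,
      ContDiff ℝ (n + 1) (fun t ↦ (A t : R)) ∧ ContDiff ℝ (n + 1) (fun t ↦ (↑(A t)⁻¹ : R)) ∧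
      (∀ t, HasDerivAt (fun t ↦ (A t : R)) (A t * G t) t) ∧
      ∀ t, HasDerivAt (fun t ↦ (↑(A t)⁻¹ : R)) (-(G t * ↑(A t)⁻¹)) t := by
  have hright : ContDiff ℝ n fun t ↦ (ContinuousLinearMap.mul ℝ R).flip (G t) := by fun_prop
  have hleft : ContDiff ℝ n fun t ↦ -ContinuousLinearMap.mul ℝ R (G t) := by fun_prop
  obtain ⟨A, hA₀, hA⟩ := exists_isIntegralCurve_clm hright.continuous 0 1
  obtain ⟨B, hB₀, hB⟩ := exists_isIntegralCurve_clm hleft.continuous 0 1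
  have hAB := mul_eq_one_of_hasDerivAt hA hB (t₀ := 0) (by rw [hA₀, hB₀, mul_one])
  have hBA := mul_eq_one_of_hasDerivAt' hG.continuous hA hB (t₀ := 0) (by rw [hA₀, hB₀, mul_one])
  exact ⟨fun t ↦ ⟨A t, B t, hAB t, hBA t⟩, contDiff_succ_of_isIntegralCurve_clm hright hA,
    contDiff_succ_of_isIntegralCurve_clm hleft hB, hA, hB⟩

end IntegratingFactor

section PartialDerivatives

variable {m : ℕ} {E F : Type*} [NormedAddCommGroup E] [NormedSpace ℝ E]
  [NormedAddCommGroup F] [NormedSpace ℝ F]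

theorem fderiv_apply_eq_sum_pd (f : (Fin m → ℝ) → F) (u x : Fin m → ℝ) :
    fderiv ℝ f u x = ∑ i, x i • pd i f u := by
  conv_lhs => rw [pi_eq_sum_univ' x]
  simp [pd]

theorem pd_clm_apply {A : ℝ → E →L[ℝ] F} {A' : E →L[ℝ] F} {f : (Fin m → ℝ) → E}
    {u : Fin m → ℝ} {i : Fin m} (hA : HasDerivAt A A' (u i)) (hf : DifferentiableAt ℝ f u)
    (j : Fin m) :
    pd j (fun v ↦ A (v i) (f v)) u =
      (Pi.single j 1 : Fin m → ℝ) i • A' (f u) + A (u i) (pd j f u) := by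
  have hAi : HasFDerivAt (fun v : Fin m → ℝ ↦ A (v i)) _ u :=
    hA.hasFDerivAt.comp u (hasFDerivAt_apply i u)
  rw [pd, (hAi.clm_apply hf.hasFDerivAt).fderiv]
  simp [pd, add_comm]

theorem exists_contDiffOn_pd_eq_of_pd_symm [CompleteSpace F] {n : ℕ∞} (hn : n ≠ 0)
    {V : Set (Fin m → ℝ)} (hV : IsOpen V) (hconv : Convex ℝ V) {p : Fin m → (Fin m → ℝ) → F}
    (hp : ∀ i, ContDiffOn ℝ n (p i) V)
    (hclosed : ∀ u ∈ V, ∀ i j, pd i (p j) u = pd j (p i) u) :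
    ∃ φ : (Fin m → ℝ) → F, ContDiffOn ℝ (n + 1) φ V ∧ ∀ u ∈ V, ∀ i, pd i φ u = p i u := by
  let e := (ContinuousLinearEquiv.piRing (𝕜 := ℝ) (E := F) (Fin m)).symm
  have e_apply : ∀ w x, e w x = ∑ i, x i • w i := fun w x ↦ LinearEquiv.piRing_symm_apply ℝ w x
  let ω : (Fin m → ℝ) → (Fin m → ℝ) →L[ℝ] F := fun u ↦ e fun i ↦ p i u
  have hω : ContDiffOn ℝ n ω V := e.contDiff.comp_contDiffOn (contDiffOn_pi.2 hp)
  have hn' : (n : WithTop ℕ∞) ≠ 0 := by exact_mod_cast hn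
  have fderiv_ω : ∀ u ∈ V, ∀ x y,
      fderiv ℝ ω u x y = ∑ i, ∑ j, (y i * x j) • pd j (p i) u := by
    intro u hu x y
    have hpu : ∀ i, DifferentiableAt ℝ (p i) u := fun i ↦
      ((hp i).differentiableOn hn').differentiableAt (hV.mem_nhds hu)
    have hωu : HasFDerivAt ω _ u :=
      e.hasFDerivAt.comp u (hasFDerivAt_pi.2 fun i ↦ (hpu i).hasFDerivAt)
    rw [hωu.fderiv]
    simp [e_apply, fderiv_apply_eq_sum_pd, Finset.smul_sum, mul_smul]
  obtain ⟨φ, hφ⟩ := hconv.exists_forall_hasFDerivAt_of_fderiv_symmetric hV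
    (hω.differentiableOn hn') fun u hu x y ↦ by
      rw [fderiv_ω u hu, fderiv_ω u hu, Finset.sum_comm]
      simp only [mul_comm, hclosed u hu]
  refine ⟨φ, (contDiffOn_succ_iff_fderiv_of_isOpen hV).2 ⟨?_, by simp, ?_⟩, fun u hu i ↦ ?_⟩
  · exact fun u hu ↦ (hφ u hu).differentiableAt.differentiableWithinAt
  · exact hω.congr fun u hu ↦ (hφ u hu).fderiv
  · rw [pd, (hφ u hu).fderiv, e_apply]
    simp [Pi.single_apply]

end PartialDerivatives

theorem integrate_h_equations_general {E : Type*} [NormedAddCommGroup E] [NormedSpace ℝ E]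
    [CompleteSpace E] {n : ℕ∞} (hn : n ≠ 0) {V : Set (Fin 2 → ℝ)} (hV : IsOpen V)
    (hconv : Convex ℝ V) {G : ℝ → E →L[ℝ] E} (hG : ContDiff ℝ n G)
    {h₁ h₂ : (Fin 2 → ℝ) → E} (hh₁ : ContDiffOn ℝ n h₁ V) (hh₂ : ContDiffOn ℝ n h₂ V)
    (heq : ∀ u ∈ V, pd 1 h₁ u - pd 0 h₂ u = G (u 0) (h₂ u)) :
    ∃ k : (Fin 2 → ℝ) → E, ContDiffOn ℝ (n + 1) k V ∧
      ∀ u ∈ V, h₁ u = pd 0 k u + G (u 0) (k u) ∧ h₂ u = pd 1 k u := by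
  obtain ⟨A, hA, hAinv, hA', hAinv'⟩ := exists_integratingFactor hG
  have hcoord : ContDiff ℝ (n + 1) fun u : Fin 2 → ℝ ↦ u 0 := by fun_prop
  have hn' : (n : WithTop ℕ∞) ≠ 0 := by exact_mod_cast hn
  have differentiableAt_of_contDiffOn : ∀ {f : (Fin 2 → ℝ) → E}, ContDiffOn ℝ n f V →
      ∀ u ∈ V, DifferentiableAt ℝ f u := fun hf u hu ↦
    (hf.differentiableOn hn').differentiableAt (hV.mem_nhds hu)
  let p : Fin 2 → (Fin 2 → ℝ) → E :=
    ![fun u ↦ (A (u 0) : E →L[ℝ] E) (h₁ u), fun u ↦ (A (u 0) : E →L[ℝ] E) (h₂ u)]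
  have hp : ∀ i, ContDiffOn ℝ n (p i) V := by
    have hA₀ : ContDiffOn ℝ n (fun u : Fin 2 → ℝ ↦ (A (u 0) : E →L[ℝ] E)) V :=
      ((hA.comp hcoord).of_le le_self_add).contDiffOn
    exact Fin.forall_fin_two.2 ⟨hA₀.clm_apply hh₁, hA₀.clm_apply hh₂⟩
  have hclosed : ∀ u ∈ V, pd 1 (p 0) u = pd 0 (p 1) u := by
    intro u hu
    have h₁_deriv : pd 1 h₁ u = G (u 0) (h₂ u) + pd 0 h₂ u := sub_eq_iff_eq_add.1 (heq u hu)
    simp [p, pd_clm_apply (hA' _) (differentiableAt_of_contDiffOn hh₁ u hu),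
      pd_clm_apply (hA' _) (differentiableAt_of_contDiffOn hh₂ u hu), h₁_deriv]
  obtain ⟨φ, hφ, hφp⟩ := exists_contDiffOn_pd_eq_of_pd_symm hn hV hconv hp fun u hu ↦ by
    simp [Fin.forall_fin_two, hclosed u hu]
  have hinv : ∀ t w, (↑(A t)⁻¹ : E →L[ℝ] E) ((A t : E →L[ℝ] E) w) = w := fun t w ↦
    congrArg (· w) (A t).inv_mul
  refine ⟨fun u ↦ (↑(A (u 0))⁻¹ : E →L[ℝ] E) (φ u),
    (hAinv.comp hcoord).contDiffOn.clm_apply hφ, fun u hu ↦ ?_⟩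
  have hφu := differentiableAt_of_contDiffOn (hφ.of_le le_self_add) u hu
  constructor <;> simp [pd_clm_apply (hAinv' _) hφu, hφp u hu, p, hinv]

theorem crossMat_mulVec (v w : Fin 3 → ℝ) : crossMat v *ᵥ w = w ⨯₃ v := by
  ext i
  fin_cases i <;> simp [crossMat, cross_apply, mulVec, dotProduct, Fin.sum_univ_three] <;> ring

/-- integration step from Section 4.3 of the paper: on a convex open
set, `∂₂h₁ - ∂₁h₂ = [g(u¹)]h₂` implies `h₁ = ∂₁k + [g(u¹)]k`, `h₂ = ∂₂k` for some
smooth `k`. -/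
theorem integrate_h_equations
    (V : Set (Fin 2 → ℝ)) (hV : IsOpen V) (hconv : Convex ℝ V)
    (g : ℝ → Fin 3 → ℝ) (hg : ContDiff ℝ (⊤ : ℕ∞) g)
    (h₁ h₂ : (Fin 2 → ℝ) → (Fin 3 → ℝ))
    (hh₁ : ContDiffOn ℝ (⊤ : ℕ∞) h₁ V) (hh₂ : ContDiffOn ℝ (⊤ : ℕ∞) h₂ V)
    (heq : ∀ u ∈ V, pd 1 h₁ u - pd 0 h₂ u = crossMat (g (u 0)) *ᵥ h₂ u) :
    ∃ k : (Fin 2 → ℝ) → (Fin 3 → ℝ), ContDiffOn ℝ (⊤ : ℕ∞) k V ∧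
      ∀ u ∈ V,
        h₁ u = pd 0 k u + crossMat (g (u 0)) *ᵥ k u ∧
        h₂ u = pd 1 k u := by
  let G : ℝ → (Fin 3 → ℝ) →L[ℝ] (Fin 3 → ℝ) := fun t ↦
    crossProduct.flip.toContinuousBilinearMap (g t)
  have hG : ContDiff ℝ (⊤ : ℕ∞) G := (ContinuousLinearMap.contDiff _).comp hg
  simp only [crossMat_mulVec] at heq ⊢
  exact integrate_h_equations_general (by simp) hV hconv hG hh₁ hh₂ heq
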